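/- arXiv:0708.2853 — 2 statements merged into one kernel-verified Lean document; each statement's English description precedes it below -/
import Mathlib

section
/- Let h ≥ 2, g ≥ 1, and let r be a positive integer with 2r ≥ log₂ h. If B is a B_h[g] sequence of positive integers, then T_γ^r(B) = {T_γ^r(b) : b ∈ B} is also a B_h[g] sequence. -/
/-!
Cut the binary expansion of `b` into blocks, the `k`-th one carrying the digits with index in
`[γ k, γ (k + 1))`. The transformation `insZeros γ r` shifts block `k` by `2 * r * k` places, thus
leaving `2 * r` empty places above each block. When at most `2 ^ (2 * r)` transformed integers are
added, these empty places absorb every carry, so the sum of the transforms determines the sum of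
the `k`-th blocks for each `k` (`eq_of_sum_eq`), and hence the sum of the original integers
(`sum_eq_of_sum_insZeros_eq`). The transformation is also strictly increasing
(`insZeros_strictMono`), so a sorted representation of `n` by elements of `insZeros γ r '' B` is
the image of a sorted representation by elements of `B`, of an integer depending only on `n`.
There are at most `g` of the latter.
-/

open Filter Set

/-- The Inserting Zeros Transformation: if `b = Σ_i ε_i 2^i` in binary, then
`insZeros γ r b = Σ_{k≥0} 2^{2rk} Σ_{i=γ(k)}^{γ(k+1)-1} ε_i 2^i`.
(Since `γ` is strictly increasing with `γ 0 = 0`, all binary digits of `b`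
have index `< γ (b+1)`, so the sum over `k ∈ [0, b]` captures all of them.) -/
def insZeros (γ : ℕ → ℕ) (r : ℕ) (b : ℕ) : ℕ :=
  ∑ k ∈ Finset.range (b + 1),
    2 ^ (2 * r * k) * ∑ i ∈ Finset.Ico (γ k) (γ (k + 1)), (b / 2 ^ i % 2) * 2 ^ i

/-- `repFnN B h n` is the number of representations of `n` in the form
`n = a 0 + ⋯ + a (h-1)` with `a 0 ≤ ⋯ ≤ a (h-1)` and all `a i ∈ B`;
values lie in `ℕ ∪ {∞}`. -/
noncomputable def repFnN (B : Set ℕ) (h : ℕ) (n : ℕ) : ℕ∞ :=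
  {a : Fin h → ℕ | Monotone a ∧ (∀ i, a i ∈ B) ∧ ∑ i, a i = n}.encard

/-- The `k`-th block of `b`: the part of `b` carried by the binary digits with index in
`[γ k, γ (k + 1))`, left in place. -/
def digitBlock (γ : ℕ → ℕ) (k b : ℕ) : ℕ :=
  ∑ i ∈ Finset.Ico (γ k) (γ (k + 1)), (b / 2 ^ i % 2) * 2 ^ i

lemma sum_digits_eq_mod (b m : ℕ) :
    ∑ i ∈ Finset.range m, (b / 2 ^ i % 2) * 2 ^ i = b % 2 ^ m := by
  induction m with
  | zero => simp [Nat.mod_one]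
  | succ m ih => rw [Finset.sum_range_succ, ih, Nat.mod_pow_succ]; ring

lemma mod_add_digitBlock {γ : ℕ → ℕ} (hγ : StrictMono γ) (k b : ℕ) :
    b % 2 ^ γ k + digitBlock γ k b = b % 2 ^ γ (k + 1) := by
  rw [← sum_digits_eq_mod, ← sum_digits_eq_mod, digitBlock]
  exact Finset.sum_range_add_sum_Ico _ (hγ.monotone (Nat.le_succ k))

lemma dvd_digitBlock (γ : ℕ → ℕ) (k b : ℕ) : 2 ^ γ k ∣ digitBlock γ k b :=
  Finset.dvd_sum fun _ hi =>
    Dvd.dvd.mul_left (pow_dvd_pow 2 (Finset.mem_Ico.1 hi).1) _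

/-- Two multiples of `d` that are ordered strictly differ by at least `d`. -/
lemma add_le_of_dvd_of_lt {d x y : ℕ} (hx : d ∣ x) (hy : d ∣ y) (h : x < y) : x + d ≤ y := by
  have := Nat.le_of_dvd (Nat.sub_pos_of_lt h) (Nat.dvd_sub hy hx)
  omega

lemma digitBlock_add_le {γ : ℕ → ℕ} (hγ : StrictMono γ) (k b : ℕ) :
    digitBlock γ k b + 2 ^ γ k ≤ 2 ^ γ (k + 1) := by
  refine add_le_of_dvd_of_lt (dvd_digitBlock γ k b)
    (pow_dvd_pow 2 (hγ.monotone (Nat.le_succ k))) ?_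
  have h1 := mod_add_digitBlock hγ k b
  have h2 := Nat.mod_lt b (Nat.two_pow_pos (γ (k + 1)))
  omega

lemma sum_digitBlock {γ : ℕ → ℕ} (hγ : StrictMono γ) (hγ0 : γ 0 = 0) (K b : ℕ) :
    ∑ k ∈ Finset.range K, digitBlock γ k b = b % 2 ^ γ K := by
  induction K with
  | zero => simp [hγ0, Nat.mod_one]
  | succ K ih => rw [Finset.sum_range_succ, ih, mod_add_digitBlock hγ]

lemma lt_two_pow_of_lt {γ : ℕ → ℕ} (hγ : StrictMono γ) {b K : ℕ} (h : b < K) :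
    b < 2 ^ γ K :=
  h.trans_le ((hγ.le_apply).trans Nat.lt_two_pow_self.le)

/-- The range of summation in `insZeros` may be any `range K` with `b < K`: this gives several
integers a common range. -/
lemma insZeros_eq {γ : ℕ → ℕ} (hγ : StrictMono γ) (r : ℕ) {b K : ℕ} (h : b < K) :
    insZeros γ r b = ∑ k ∈ Finset.range K, 2 ^ (2 * r * k) * digitBlock γ k b := by
  refine Finset.sum_subset (Finset.range_subset_range.2 h) fun k _ hk => ?_
  have hbk : b < k := by simpa using hk
  have h1 := mod_add_digitBlock hγ k b
  rw [Nat.mod_eq_of_lt (lt_two_pow_of_lt hγ hbk),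
    Nat.mod_eq_of_lt (lt_two_pow_of_lt hγ (hbk.trans k.lt_succ_self))] at h1
  have h2 : digitBlock γ k b = 0 := by omega
  change 2 ^ (2 * r * k) * digitBlock γ k b = 0
  rw [h2, mul_zero]

/-- If the `k`-th term fits between the positions `c k` and `c (k + 1)`, then the first `K` terms
together stay below position `c K`. -/
lemma sum_lt_two_pow {c X : ℕ → ℕ} (hX : ∀ k, X k + 2 ^ c k ≤ 2 ^ c (k + 1)) (K : ℕ) :
    ∑ k ∈ Finset.range K, X k < 2 ^ c K := by
  induction K with
  | zero => simp
  | succ K ih => rw [Finset.sum_range_succ]; have := hX K; omega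

/-- Uniqueness of the mixed-radix expansion with place values `2 ^ c k`. -/
lemma eq_of_sum_eq {c X Y : ℕ → ℕ}
    (hX : ∀ k, X k + 2 ^ c k ≤ 2 ^ c (k + 1)) (hY : ∀ k, Y k + 2 ^ c k ≤ 2 ^ c (k + 1))
    (hXd : ∀ k, 2 ^ c k ∣ X k) (hYd : ∀ k, 2 ^ c k ∣ Y k) (K : ℕ)
    (h : ∑ k ∈ Finset.range K, X k = ∑ k ∈ Finset.range K, Y k) :
    ∀ k < K, X k = Y k := by
  induction K with
  | zero => simp
  | succ K ih =>
    rw [Finset.sum_range_succ, Finset.sum_range_succ] at h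
    have h1 := sum_lt_two_pow hX K
    have h2 := sum_lt_two_pow hY K
    have hK : X K = Y K := by
      rcases lt_trichotomy (X K) (Y K) with hlt | heq | hgt
      · have := add_le_of_dvd_of_lt (hXd K) (hYd K) hlt
        omega
      · exact heq
      · have := add_le_of_dvd_of_lt (hYd K) (hXd K) hgt
        omega
    intro k hk
    rcases Nat.lt_succ_iff_lt_or_eq.1 hk with hk | rfl
    · exact ih (by omega) k hk
    · exact hK

/-- Bound on the shifted block sums of `h` integers: adding at most `2 ^ (2 * r)` blocks does not
overflow the `2 * r` inserted zeros. -/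
lemma shifted_sum_add_le {γ : ℕ → ℕ} (hγ : StrictMono γ) {h r : ℕ} (hh : 1 ≤ h)
    (hr : h ≤ 2 ^ (2 * r)) (b : Fin h → ℕ) (k : ℕ) :
    2 ^ (2 * r * k) * ∑ j, digitBlock γ k (b j) + 2 ^ (2 * r * k + γ k) ≤
      2 ^ (2 * r * (k + 1) + γ (k + 1)) := by
  have h1 : ∑ j, (digitBlock γ k (b j) + 2 ^ γ k) ≤ ∑ _j : Fin h, 2 ^ γ (k + 1) :=
    Finset.sum_le_sum fun j _ => digitBlock_add_le hγ k (b j)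
  simp only [Finset.sum_add_distrib, Finset.sum_const, Finset.card_univ, Fintype.card_fin,
    smul_eq_mul] at h1
  have h2 : 2 ^ γ k ≤ h * 2 ^ γ k := Nat.le_mul_of_pos_left _ hh
  calc _ = 2 ^ (2 * r * k) * (∑ j, digitBlock γ k (b j) + 2 ^ γ k) := by ring
    _ ≤ 2 ^ (2 * r * k) * (2 ^ (2 * r) * 2 ^ γ (k + 1)) :=
        Nat.mul_le_mul_left _
          (((Nat.add_le_add_left h2 _).trans h1).trans (Nat.mul_le_mul_right _ hr))
    _ = _ := by ring

lemma sum_eq_of_sum_insZeros_eq {γ : ℕ → ℕ} (hγ : StrictMono γ) (hγ0 : γ 0 = 0) {h r : ℕ}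
    (hh : 1 ≤ h) (hr : h ≤ 2 ^ (2 * r)) (a b : Fin h → ℕ)
    (hab : ∑ j, insZeros γ r (a j) = ∑ j, insZeros γ r (b j)) : ∑ j, a j = ∑ j, b j := by
  -- `K` exceeds every `a j` and every `b j`
  set K := ∑ j, a j + ∑ j, b j + 1 with hK
  have ha (j : Fin h) : a j < K := by
    have := Finset.single_le_sum (fun i _ => Nat.zero_le (a i)) (Finset.mem_univ j)
    omega
  have hb (j : Fin h) : b j < K := by
    have := Finset.single_le_sum (fun i _ => Nat.zero_le (b i)) (Finset.mem_univ j)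
    omega
  have hT (x : Fin h → ℕ) (hx : ∀ j, x j < K) : ∑ j, insZeros γ r (x j) =
      ∑ k ∈ Finset.range K, 2 ^ (2 * r * k) * ∑ j, digitBlock γ k (x j) := by
    rw [Finset.sum_congr rfl fun j _ => insZeros_eq hγ r (hx j), Finset.sum_comm]
    simp only [Finset.mul_sum]
  have hS (x : Fin h → ℕ) (hx : ∀ j, x j < K) :
      ∑ j, x j = ∑ k ∈ Finset.range K, ∑ j, digitBlock γ k (x j) := by
    rw [Finset.sum_comm]
    refine Finset.sum_congr rfl fun j _ => ?_
    rw [sum_digitBlock hγ hγ0, Nat.mod_eq_of_lt (lt_two_pow_of_lt hγ (hx j))]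
  have hd (x : Fin h → ℕ) (k : ℕ) :
      2 ^ (2 * r * k + γ k) ∣ 2 ^ (2 * r * k) * ∑ j, digitBlock γ k (x j) := by
    rw [pow_add]
    exact Nat.mul_dvd_mul_left _ (Finset.dvd_sum fun j _ => dvd_digitBlock γ k (x j))
  rw [hT a ha, hT b hb] at hab
  have key := eq_of_sum_eq (c := fun k => 2 * r * k + γ k) (shifted_sum_add_le hγ hh hr a)
    (shifted_sum_add_le hγ hh hr b) (hd a) (hd b) K hab
  rw [hS a ha, hS b hb]
  exact Finset.sum_congr rfl fun k hk =>
    Nat.eq_of_mul_eq_mul_left (Nat.two_pow_pos _) (key k (Finset.mem_range.1 hk))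

/-- The highest block in which two integers differ decides both the order of the integers and the
order of their transforms. -/
lemma insZeros_strictMono {γ : ℕ → ℕ} (hγ : StrictMono γ) (hγ0 : γ 0 = 0) (r : ℕ) :
    StrictMono (insZeros γ r) := by
  intro a b hab
  have main : ∀ K, a % 2 ^ γ K < b % 2 ^ γ K →
      ∑ k ∈ Finset.range K, 2 ^ (2 * r * k) * digitBlock γ k a <
        ∑ k ∈ Finset.range K, 2 ^ (2 * r * k) * digitBlock γ k b := by
    intro K
    induction K with
    | zero => simp [hγ0, Nat.mod_one]
    | succ K ih =>
      intro h
      rw [← mod_add_digitBlock hγ, ← mod_add_digitBlock hγ] at h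
      rw [Finset.sum_range_succ, Finset.sum_range_succ]
      rcases lt_trichotomy (digitBlock γ K a) (digitBlock γ K b) with hlt | heq | hgt
      · have h1 := Nat.mul_le_mul_left (2 ^ (2 * r * K))
          (add_le_of_dvd_of_lt (dvd_digitBlock γ K a) (dvd_digitBlock γ K b) hlt)
        have h2 := sum_lt_two_pow (c := fun k => 2 * r * k + γ k)
          (X := fun k => 2 ^ (2 * r * k) * digitBlock γ k a) (fun k => by
            simpa using shifted_sum_add_le hγ le_rfl (Nat.one_le_two_pow (n := 2 * r))
              (fun _ => a) k) K
        simp only [pow_add] at h2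
        rw [mul_add] at h1
        omega
      · rw [heq] at h ⊢
        have := ih (by omega)
        omega
      · have h1 := add_le_of_dvd_of_lt (dvd_digitBlock γ K b) (dvd_digitBlock γ K a) hgt
        have h2 := Nat.mod_lt b (Nat.two_pow_pos (γ K))
        omega
  rw [insZeros_eq hγ r (hab.trans b.lt_succ_self), insZeros_eq hγ r b.lt_succ_self]
  refine main _ ?_
  rwa [Nat.mod_eq_of_lt (lt_two_pow_of_lt hγ (hab.trans b.lt_succ_self)),
    Nat.mod_eq_of_lt (lt_two_pow_of_lt hγ b.lt_succ_self)]

theorem stmt_7 (γ : ℕ → ℕ) (hγ : StrictMono γ) (hγ0 : γ 0 = 0)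
    (h g r : ℕ) (hh : 2 ≤ h) (hg : 1 ≤ g) (hr : 0 < r)
    (hlog : Real.logb 2 h ≤ 2 * r)
    (B : Set ℕ) (hBpos : ∀ b ∈ B, 0 < b)
    (hB : ∀ n : ℕ, repFnN B h n ≤ g) :
    ∀ n : ℕ, repFnN (insZeros γ r '' B) h n ≤ g := by
  intro n
  have hh1 : 1 ≤ h := by omega
  have hpow : h ≤ 2 ^ (2 * r) := by
    rw [Real.logb_le_iff_le_rpow one_lt_two (by exact_mod_cast hh1)] at hlog
    have h2 : (2 : ℝ) ^ (2 * (r : ℝ)) = ((2 ^ (2 * r) : ℕ) : ℝ) := by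
      rw [Nat.cast_pow, ← Real.rpow_natCast]
      push_cast
      rfl
    rw [h2] at hlog
    exact_mod_cast hlog
  unfold repFnN
  rcases Set.eq_empty_or_nonempty
    {a : Fin h → ℕ | Monotone a ∧ (∀ i, a i ∈ insZeros γ r '' B) ∧ ∑ i, a i = n} with he | hne
  · rw [he, Set.encard_empty]
    exact zero_le
    -- one representation of `n` fixes the sum `∑ i, b₀ i` shared by all preimages
  · obtain ⟨a₀, -, ha₀, hs₀⟩ := hne
    choose b₀ _ hT₀ using ha₀
    refine le_trans (Set.encard_le_encard ?_)
      ((Set.encard_image_le (fun b i => insZeros γ r (b i)) _).trans (hB (∑ i, b₀ i)))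
    rintro a ⟨hmono, ha, hs⟩
    choose b hbB hT using ha
    refine ⟨b, ⟨fun i j hij => ?_, hbB, ?_⟩, funext hT⟩
    · rw [← (insZeros_strictMono hγ hγ0 r).le_iff_le, hT, hT]
      exact hmono hij
    · refine sum_eq_of_sum_insZeros_eq hγ hγ0 hh1 hpow b b₀ ?_
      simp only [hT, hT₀, hs, hs₀]
end

section
/- In the recursive construction, fix k ≥ 1 and for nonnegative integers s, t with s + t ≤ h define A_k^{(s,t)} = (h−s−t)A_{k−1} + s·u_{2k−1} + t·u_{2k}, where (h−s−t)A_{k−1} denotes the (h−s−t)-fold sumset of A_{k−1}. If n ∈ A_k^{(s,t)} for some pair (s,t) with (s,t) ∉ {(0,0), (h−1,1)}, then |n| > n_0. -/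
/-!
Write `k = K + 1` and `D = 2^(2rK + γ(K+1))`, so that `m_k = 2^(2r) D` and `m_k 2^(-r) = 2^r D`.

Every element of `A_{k-1}` is, modulo `m_k`, at most `D` in absolute value
(`Aseq_decomp`). For the elements `T_γ^r(b)` this is because the transformation leaves a gap of
`2r` zeros just below the bit of weight `m_k` (`insZeros_decomp`); the elements `u_i` with
`i ≤ 2(k-1)` are themselves at most `D` in absolute value (`abs_u1_le`, `abs_u2_le`).

Hence an element of `A_k^{(s,t)}` has the form `2^r D (2^r q + c) + (e + t z_k)` with
`c = t(h-1) - s` and `|e| ≤ h D`. Since `|c| < h² < 2^r`, the factor `2^r q + c` is nonzero unless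
`c = 0`, which happens only for `(s,t) = (0,0)` and `(s,t) = (h-1,1)`. Otherwise the leading term
is at least `2^r D > 2(h² + n₀) D` in absolute value, which dominates the error
`h D + h |z_k| ≤ 2 h D` with more than `n₀` to spare.
-/

open Filter Set Pointwise

/-- `repFn A h n` is the number of representations of `n` in the form
`n = a 0 + ⋯ + a (h-1)` with `a 0 ≤ ⋯ ≤ a (h-1)` and all `a i ∈ A`;
values lie in `ℕ ∪ {∞}`. -/
noncomputable def repFn (A : Set ℤ) (h : ℕ) (n : ℤ) : ℕ∞ :=
  {a : Fin h → ℤ | Monotone a ∧ (∀ i, a i ∈ A) ∧ ∑ i, a i = n}.encard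

/-- `zseq j = j - ⌊√j⌋(⌊√j⌋ + 1)`. -/
def zseq (j : ℕ) : ℤ := (j : ℤ) - (Nat.sqrt j : ℤ) * ((Nat.sqrt j : ℤ) + 1)

/-- `m_k = 2^{2rk + γ(k)}`. -/
def mval (γ : ℕ → ℕ) (r k : ℕ) : ℤ := 2 ^ (2 * r * k + γ k)

/-- `u_{2k-1} = -m_k·2^{-r}` (the division is exact for `k ≥ 1`). -/
def u1 (γ : ℕ → ℕ) (r k : ℕ) : ℤ := -(mval γ r k / 2 ^ r)

/-- `u_{2k} = (h-1)·m_k·2^{-r} + z_k` (the division is exact for `k ≥ 1`). -/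
def u2 (γ : ℕ → ℕ) (r h k : ℕ) : ℤ := ((h : ℤ) - 1) * (mval γ r k / 2 ^ r) + zseq k

open Classical in
/-- The recursive construction: `A_0 = {a ∈ T_γ^r(B) : a ≥ n_0}` and, for `k ≥ 1`,
`A_k = A_{k-1} ∪ {u_{2k-1}, u_{2k}}` if `r_{A_{k-1},h}(z_k) < f(z_k)`, else `A_k = A_{k-1}`. -/
noncomputable def Aseq (γ : ℕ → ℕ) (r h n0 : ℕ) (f : ℤ → ℕ∞) (B : Set ℕ) : ℕ → Set ℤ
  | 0 => {a : ℤ | (∃ b ∈ B, (insZeros γ r b : ℤ) = a) ∧ (n0 : ℤ) ≤ a}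
  | k + 1 =>
    if repFn (Aseq γ r h n0 f B k) h (zseq (k + 1)) < f (zseq (k + 1)) then
      Aseq γ r h n0 f B k ∪ {u1 γ r (k + 1), u2 γ r h (k + 1)}
    else Aseq γ r h n0 f B k

/-- The `m`-fold sumset of `A` (equal to `{0}` when `m = 0`). -/
def nSumset (A : Set ℤ) : ℕ → Set ℤ
  | 0 => {0}
  | m + 1 => A + nSumset A m

/-- `A_k^{(s,t)} = (h-s-t)·A_{k-1} + s·u_{2k-1} + t·u_{2k}`. -/
noncomputable def Ast (γ : ℕ → ℕ) (r h n0 : ℕ) (f : ℤ → ℕ∞) (B : Set ℕ)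
    (k s t : ℕ) : Set ℤ :=
  (fun x => x + (s : ℤ) * u1 γ r k + (t : ℤ) * u2 γ r h k) ''
    nSumset (Aseq γ r h n0 f B (k - 1)) (h - s - t)

/-- `D_K = m_{K+1} · 2^(-2r)`: a bound for the residues modulo `m_{K+1}` of the elements
of `A_K`. -/
def dval (γ : ℕ → ℕ) (r K : ℕ) : ℕ := 2 ^ (2 * r * K + γ (K + 1))

lemma block_add_le (b x y : ℕ) (hxy : x ≤ y) :
    ∑ i ∈ Finset.Ico x y, (b / 2 ^ i % 2) * 2 ^ i + 2 ^ x ≤ 2 ^ y := by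
  induction y, hxy using Nat.le_induction with
  | base => simp
  | succ y hy ih =>
    rw [Finset.sum_Ico_succ_top hy, pow_succ]
    have h1 : b / 2 ^ y % 2 ≤ 1 := by omega
    nlinarith [Nat.mul_le_mul_right (2 ^ y) h1]

lemma block_dvd (b x y : ℕ) :
    2 ^ x ∣ ∑ i ∈ Finset.Ico x y, (b / 2 ^ i % 2) * 2 ^ i :=
  Finset.dvd_sum fun _ hi =>
    Dvd.dvd.mul_left (pow_dvd_pow 2 (Finset.mem_Ico.mp hi).1) _

lemma low_blocks_lt (γ : ℕ → ℕ) (hγ : StrictMono γ) (r b K : ℕ) :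
    ∑ k ∈ Finset.range (K + 1),
      2 ^ (2 * r * k) * ∑ i ∈ Finset.Ico (γ k) (γ (k + 1)), (b / 2 ^ i % 2) * 2 ^ i
      < dval γ r K := by
  unfold dval
  induction K with
  | zero =>
    have := block_add_le b (γ 0) (γ 1) (hγ.monotone (by omega))
    have h2 : 0 < 2 ^ γ 0 := by positivity
    simp only [zero_add, Finset.sum_range_one, mul_zero, pow_zero, one_mul]
    omega
  | succ K ih =>
    rw [Finset.sum_range_succ]
    have h1 := block_add_le b (γ (K + 1)) (γ (K + 1 + 1)) (hγ.monotone (by omega))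
    have h2 := Nat.mul_le_mul_left (2 ^ (2 * r * (K + 1))) h1
    have h3 : 2 ^ (2 * r * K + γ (K + 1)) ≤ 2 ^ (2 * r * (K + 1)) * 2 ^ γ (K + 1) := by
      rw [← pow_add]
      exact Nat.pow_le_pow_right (by norm_num) (by nlinarith)
    rw [mul_add, ← pow_add _ _ (γ (K + 1 + 1))] at h2
    omega

lemma pow_mul_dval (γ : ℕ → ℕ) (r K : ℕ) :
    2 ^ (2 * r) * dval γ r K = 2 ^ (2 * r * (K + 1)) * 2 ^ γ (K + 1) := by
  unfold dval
  rw [← pow_add, ← pow_add]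
  ring_nf

/-- The blocks of index greater than `K` are multiples of `m_{K+1}`, and the blocks of index at
most `K` add up to less than `D_K`. -/
lemma insZeros_decomp (γ : ℕ → ℕ) (hγ : StrictMono γ) (r b K : ℕ) :
    ∃ q e : ℕ, insZeros γ r b = q * (2 ^ (2 * r) * dval γ r K) + e ∧ e ≤ dval γ r K := by
  unfold insZeros
  generalize b + 1 = N
  rcases le_total N (K + 1) with hN | hN
  · refine ⟨0, _, by rw [zero_mul, zero_add], ?_⟩
    refine le_trans ?_ (low_blocks_lt γ hγ r b K).le
    exact Finset.sum_le_sum_of_subset (Finset.range_mono hN)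
  · induction N, hN using Nat.le_induction with
    | base => exact ⟨0, _, by rw [zero_mul, zero_add], (low_blocks_lt γ hγ r b K).le⟩
    | succ N hN ih =>
      obtain ⟨q, e, h1, h2⟩ := ih
      have h3 : 2 ^ (2 * r) * dval γ r K ∣ 2 ^ (2 * r * N) *
          ∑ i ∈ Finset.Ico (γ N) (γ (N + 1)), (b / 2 ^ i % 2) * 2 ^ i := by
        rw [pow_mul_dval]
        exact mul_dvd_mul (pow_dvd_pow 2 (Nat.mul_le_mul_left _ hN))
          ((pow_dvd_pow 2 (hγ.monotone hN)).trans (block_dvd _ _ _))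
      obtain ⟨p, hp⟩ := h3
      refine ⟨q + p, e, ?_, h2⟩
      rw [Finset.sum_range_succ, h1, hp]
      ring

lemma mval_div (γ : ℕ → ℕ) (r K : ℕ) :
    mval γ r (K + 1) / 2 ^ r = 2 ^ r * (dval γ r K : ℤ) := by
  have h1 : mval γ r (K + 1) = 2 ^ r * (dval γ r K : ℤ) * 2 ^ r := by
    unfold mval dval
    push_cast
    rw [← pow_add, ← pow_add]
    ring_nf
  rw [h1, Int.mul_ediv_cancel _ (by positivity)]

lemma abs_zseq_le (j : ℕ) : |zseq j| ≤ j := by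
  unfold zseq
  have h1 : (Nat.sqrt j : ℤ) * Nat.sqrt j ≤ j := by exact_mod_cast Nat.sqrt_le j
  have h2 : (j : ℤ) ≤ Nat.sqrt j * Nat.sqrt j + Nat.sqrt j + Nat.sqrt j := by
    exact_mod_cast Nat.sqrt_le_add j
  have h3 : (Nat.sqrt j : ℤ) ≤ j := by exact_mod_cast Nat.sqrt_le_self j
  rw [abs_le]
  constructor <;> linarith

lemma succ_le_dval (γ : ℕ → ℕ) (hγ : StrictMono γ) (r K : ℕ) : K + 1 ≤ dval γ r K := by
  have h1 : K + 1 ≤ 2 * r * K + γ (K + 1) := le_add_left (hγ.le_apply (x := K + 1))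
  exact h1.trans Nat.lt_two_pow_self.le

lemma abs_zseq_le_dval (γ : ℕ → ℕ) (hγ : StrictMono γ) (r K : ℕ) :
    |zseq (K + 1)| ≤ dval γ r K :=
  (abs_zseq_le _).trans (by exact_mod_cast succ_le_dval γ hγ r K)

lemma mul_dval_le (γ : ℕ → ℕ) (hγ : StrictMono γ) (r j K : ℕ) (hj : j < K) :
    2 ^ r * (2 ^ r * (dval γ r j : ℤ)) ≤ dval γ r K := by
  have : 2 ^ r * (2 ^ r * dval γ r j) ≤ dval γ r K := by
    unfold dval
    rw [← pow_add, ← pow_add]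
    refine Nat.pow_le_pow_right (by norm_num) ?_
    have h1 : γ (j + 1) ≤ γ (K + 1) := hγ.monotone (by omega)
    have h2 : 2 * r * (j + 1) ≤ 2 * r * K := Nat.mul_le_mul_left _ hj
    linarith
  exact_mod_cast this

lemma abs_u1_le (γ : ℕ → ℕ) (hγ : StrictMono γ) (r j K : ℕ) (hj : j < K) :
    |u1 γ r (j + 1)| ≤ dval γ r K := by
  have h1 := mul_dval_le γ hγ r j K hj
  have h2 : (1 : ℤ) ≤ 2 ^ r := one_le_pow₀ (by norm_num)
  have h3 : (0 : ℤ) ≤ 2 ^ r * (dval γ r j : ℤ) := by positivity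
  unfold u1
  rw [mval_div, abs_neg, abs_of_nonneg h3]
  nlinarith

lemma abs_u2_le (γ : ℕ → ℕ) (hγ : StrictMono γ) (r h j K : ℕ) (hj : j < K) (hh : 1 ≤ h)
    (hr : (h : ℤ) ≤ 2 ^ r) :
    |u2 γ r h (j + 1)| ≤ dval γ r K := by
  have h1 := mul_dval_le γ hγ r j K hj
  have h2 : (1 : ℤ) ≤ 2 ^ r := one_le_pow₀ (by norm_num)
  have h3 : (dval γ r j : ℤ) ≤ 2 ^ r * (dval γ r j : ℤ) :=
    le_mul_of_one_le_left (by positivity) h2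
  have h4 := abs_zseq_le_dval γ hγ r j
  have h5 : (0 : ℤ) ≤ (h : ℤ) - 1 := by omega
  have h6 : (0 : ℤ) ≤ 2 ^ r * (dval γ r j : ℤ) := by positivity
  have h7 := mul_le_mul_of_nonneg_right hr h6
  unfold u2
  rw [mval_div]
  refine (abs_add_le _ _).trans ?_
  rw [abs_of_nonneg (mul_nonneg h5 h6)]
  linarith

/-- Every element of `A_j` with `j ≤ K` is congruent modulo `m_{K+1} = 2^(2r) D_K` to an integer
of absolute value at most `D_K`. -/
lemma Aseq_decomp (γ : ℕ → ℕ) (hγ : StrictMono γ) (r h n0 : ℕ) (f : ℤ → ℕ∞) (B : Set ℕ)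
    (hh : 1 ≤ h) (hr : (h : ℤ) ≤ 2 ^ r) (K j : ℕ) (hj : j ≤ K) (a : ℤ)
    (ha : a ∈ Aseq γ r h n0 f B j) :
    ∃ q e : ℤ, a = q * (2 ^ (2 * r) * dval γ r K) + e ∧ |e| ≤ dval γ r K := by
  induction j with
  | zero =>
    obtain ⟨⟨b, -, rfl⟩, -⟩ := ha
    obtain ⟨q, e, h1, h2⟩ := insZeros_decomp γ hγ r b K
    refine ⟨q, e, by exact_mod_cast h1, ?_⟩
    rw [Nat.abs_cast]
    exact_mod_cast h2
  | succ j ih =>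
    rw [Aseq] at ha
    split_ifs at ha
    · rcases ha with ha | ha | ha
      · exact ih (by omega) ha
      · exact ⟨0, a, by ring, ha ▸ abs_u1_le γ hγ r j K hj⟩
      · rw [Set.mem_singleton_iff] at ha
        exact ⟨0, a, by ring, ha ▸ abs_u2_le γ hγ r h j K hj hh hr⟩
    · exact ih (by omega) ha

lemma nSumset_decomp (A : Set ℤ) (m D : ℤ) (hA : ∀ a ∈ A, ∃ q e : ℤ, a = q * m + e ∧ |e| ≤ D)
    (l : ℕ) (x : ℤ) (hx : x ∈ nSumset A l) :
    ∃ q e : ℤ, x = q * m + e ∧ |e| ≤ l * D := by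
  induction l generalizing x with
  | zero =>
    have hx0 : x = 0 := hx
    exact ⟨0, 0, by simp [hx0], by simp⟩
  | succ l ih =>
    obtain ⟨a, ha, y, hy, rfl⟩ := hx
    obtain ⟨q, e, h1, h2⟩ := hA a ha
    obtain ⟨p, d, h3, h4⟩ := ih y hy
    refine ⟨q + p, e + d, by simp only [h1, h3]; ring, ?_⟩
    push_cast
    linarith [abs_add_le e d]

/-- The hypothesis on `r` in integer form. -/
lemma two_pow_gt (h n0 r : ℕ) (hh : 2 ≤ h)
    (hr : 1 + Real.logb 2 ((h : ℝ) ^ 2 + (n0 : ℝ)) < (r : ℝ)) :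
    2 * ((h : ℤ) ^ 2 + n0) < 2 ^ r := by
  have hpos : (0 : ℝ) < (h : ℝ) ^ 2 + n0 := by positivity
  have h1 : Real.logb 2 (2 * ((h : ℝ) ^ 2 + n0)) < r := by
    rwa [Real.logb_mul (by norm_num) hpos.ne', Real.logb_self_eq_one (by norm_num)]
  rw [Real.logb_lt_iff_lt_rpow (by norm_num) (by positivity), Real.rpow_natCast] at h1
  exact_mod_cast h1

/-- The coefficient `c = t(h-1) - s` vanishes only for the two excluded pairs. -/
lemma coeff_ne_zero (h s t : ℕ) (hh : 2 ≤ h) (hst : s + t ≤ h)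
    (hne0 : (s, t) ≠ (0, 0)) (hne1 : (s, t) ≠ (h - 1, 1)) :
    (t : ℤ) * ((h : ℤ) - 1) - s ≠ 0 := by
  intro hc
  have ht : t ≤ 1 := by
    by_contra! ht
    have : (2 : ℤ) ≤ t := by exact_mod_cast ht
    nlinarith
  interval_cases t
  · exact hne0 (by simp; omega)
  · exact hne1 (by simp; omega)


/-- If `n ∈ A_k^{(s,t)}` for some `(s,t) ∉ {(0,0), (h-1,1)}`, then `|n| > n_0`. -/
theorem stmt_12 (h g n0 r : ℕ) (hh : 2 ≤ h) (hg : 1 ≤ g) (hn0 : 1 ≤ n0)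
    (f : ℤ → ℕ∞) (hf : ∀ n : ℤ, (n0 : ℤ) ≤ |n| → (g : ℕ∞) ≤ f n)
    (hr : 1 + Real.logb 2 ((h : ℝ) ^ 2 + (n0 : ℝ)) < (r : ℝ))
    (γ : ℕ → ℕ) (hγ : StrictMono γ) (hγ0 : γ 0 = 0)
    (B : Set ℕ) (hBpos : ∀ b ∈ B, 0 < b) (hB : ∀ n : ℕ, repFnN B h n ≤ g)
    (k : ℕ) (hk : 1 ≤ k)
    (s t : ℕ) (hst : s + t ≤ h)
    (hne0 : (s, t) ≠ (0, 0)) (hne1 : (s, t) ≠ (h - 1, 1))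
    (n : ℤ) (hn : n ∈ Ast γ r h n0 f B k s t) :
    (n0 : ℤ) < |n| := by
  obtain ⟨K, rfl⟩ : ∃ K, k = K + 1 := ⟨k - 1, by omega⟩
  have hR := two_pow_gt h n0 r hh hr
  have hh' : (2 : ℤ) ≤ h := by exact_mod_cast hh
  have hst' : (s : ℤ) + t ≤ h := by exact_mod_cast hst
  have hs0 : (0 : ℤ) ≤ s := by positivity
  have ht0 : (0 : ℤ) ≤ t := by positivity
  have hn0' : (0 : ℤ) ≤ n0 := by positivity
  have hhR : (h : ℤ) ≤ 2 ^ r := by nlinarith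
  obtain ⟨x, hx, rfl⟩ := hn
  obtain ⟨q, e, rfl, he⟩ := nSumset_decomp _ _ _
    (fun a ha => Aseq_decomp γ hγ r h n0 f B (by omega) hhR K K le_rfl a ha) _ x hx
  have hD1 : (1 : ℤ) ≤ dval γ r K := by
    exact_mod_cast (Nat.le_add_left 1 K).trans (succ_le_dval γ hγ r K)
  have hz := abs_zseq_le_dval γ hγ r K
  have hc := coeff_ne_zero h s t hh hst hne0 hne1
  simp only [u1, u2, mval_div]
  have hl : ((h - s - t : ℕ) : ℤ) ≤ h := by omega
  generalize ((h - s - t : ℕ) : ℤ) = l at he hl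
  generalize (dval γ r K : ℤ) = D at *
  generalize zseq (K + 1) = z at *
  rw [two_mul r, pow_add]
  generalize (2 : ℤ) ^ r = R at *
  set c : ℤ := (t : ℤ) * ((h : ℤ) - 1) - s with hcdef
  -- `2^r` does not divide `c`, because `0 < |c| < 2^r`.
  have hfac : R * q + c ≠ 0 := by
    intro h0
    refine hc (Int.eq_zero_of_abs_lt_dvd (m := R) ⟨-q, by linarith⟩ ?_)
    rw [abs_lt]
    constructor <;> nlinarith
  have hfac1 : 1 ≤ |R * q + c| := Int.one_le_abs hfac
  have hR0 : 0 < R := by nlinarith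
  have hmain : R * D ≤ |R * D * (R * q + c)| := by
    rw [abs_mul, abs_of_pos (by positivity)]
    exact le_mul_of_one_le_right (by positivity) hfac1
  have herr : |e + t * z| ≤ 2 * (h * D) := by
    refine (abs_add_le _ _).trans ?_
    rw [abs_mul, abs_of_nonneg ht0]
    have h1 : l * D ≤ h * D := mul_le_mul_of_nonneg_right hl (by linarith)
    have h2 : t * |z| ≤ h * D :=
      mul_le_mul (by linarith) hz (abs_nonneg _) (by linarith)
    linarith
  have heq : q * (R * R * D) + e + s * -(R * D) + t * (((h : ℤ) - 1) * (R * D) + z)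
      = R * D * (R * q + c) + (e + t * z) := by
    rw [hcdef]
    ring
  rw [heq]
  have htri := abs_sub_abs_le_abs_add (R * D * (R * q + c)) (e + t * z)
  have h3 : (n0 : ℤ) + 2 * h + 1 ≤ R := by nlinarith
  have h4 : ((n0 : ℤ) + 2 * h + 1) * D ≤ R * D :=
    mul_le_mul_of_nonneg_right h3 (by linarith)
  have h5 : (n0 : ℤ) ≤ n0 * D := le_mul_of_one_le_right hn0' hD1
  linarith
end
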